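/- For every z ∈ ℝ, P(W̄ ≤ z) − Φ(z) = Σᵢ₌₁ⁿ E[ξᵢ² 1{ξᵢ > 1}] · E[f_z′(W̄)] + Σᵢ₌₁ⁿ ∫_{−∞}^1 E[f_z′(W̄⁽ⁱ⁾ + x̄ᵢ) − f_z′(W̄⁽ⁱ⁾ + t)] K̄ᵢ(t) dt + Σᵢ₌₁ⁿ E[ξᵢ 1{ξᵢ > 1}] · E[f_z(W̄⁽ⁱ⁾)]. -/

import Mathlib

open MeasureTheory ProbabilityTheory Real

/-- The standard normal cumulative distribution function. -/
noncomputable def Phi (z : ℝ) : ℝ :=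
  (Real.sqrt (2 * Real.pi))⁻¹ * ∫ u in Set.Iic z, Real.exp (-u ^ 2 / 2)

/-- The bounded solution `f_z` of the Stein equation
`f'(w) - w f(w) = 1{w ≤ z} - Φ(z)`. -/
noncomputable def fz (z w : ℝ) : ℝ :=
  if w ≤ z then Real.sqrt (2 * Real.pi) * Real.exp (w ^ 2 / 2) * Phi w * (1 - Phi z)
  else Real.sqrt (2 * Real.pi) * Real.exp (w ^ 2 / 2) * Phi z * (1 - Phi w)

/-- The derivative `f_z'`, expressed via the Stein equation. -/
noncomputable def fz' (z w : ℝ) : ℝ :=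
  w * fz z w + (if w ≤ z then 1 else 0) - Phi z

/-- The truncation `x̄ᵢ = ξᵢ 1{ξᵢ ≤ 1}`. -/
noncomputable def xbar {Ω : Type*} {n : ℕ} (ξ : Fin n → Ω → ℝ) (i : Fin n) (ω : Ω) : ℝ :=
  if ξ i ω ≤ 1 then ξ i ω else 0

/-- `W̄ = ∑ᵢ x̄ᵢ`. -/
noncomputable def Wbar {Ω : Type*} {n : ℕ} (ξ : Fin n → Ω → ℝ) (ω : Ω) : ℝ :=
  ∑ i, xbar ξ i ω

/-- `W̄⁽ⁱ⁾ = W̄ - x̄ᵢ`. -/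
noncomputable def Wbari {Ω : Type*} {n : ℕ} (ξ : Fin n → Ω → ℝ) (i : Fin n) (ω : Ω) : ℝ :=
  Wbar ξ ω - xbar ξ i ω

/-- `K̄ᵢ(t) = E[x̄ᵢ (1{0 ≤ t ≤ x̄ᵢ} - 1{x̄ᵢ ≤ t < 0})]`. -/
noncomputable def Kbar {Ω : Type*} [MeasureSpace Ω] {n : ℕ} (ξ : Fin n → Ω → ℝ)
    (i : Fin n) (t : ℝ) : ℝ :=
  ∫ ω, xbar ξ i ω * ((if 0 ≤ t ∧ t ≤ xbar ξ i ω then (1 : ℝ) else 0)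
    - (if xbar ξ i ω ≤ t ∧ t < 0 then (1 : ℝ) else 0))

/-- `β₂ = ∑ᵢ E[ξᵢ² 1{|ξᵢ| > 1}]`. -/
noncomputable def beta2 {Ω : Type*} [MeasureSpace Ω] {n : ℕ} (ξ : Fin n → Ω → ℝ) : ℝ :=
  ∑ i, ∫ ω, (if 1 < |ξ i ω| then (ξ i ω) ^ 2 else 0)

/-- `β₃ = ∑ᵢ E[|ξᵢ|³ 1{|ξᵢ| ≤ 1}]`. -/
noncomputable def beta3 {Ω : Type*} [MeasureSpace Ω] {n : ℕ} (ξ : Fin n → Ω → ℝ) : ℝ :=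
  ∑ i, ∫ ω, (if |ξ i ω| ≤ 1 then |ξ i ω| ^ 3 else 0)

/-!
Evaluated at `W̄` and integrated, the Stein equation turns `P(W̄ ≤ z) - Φ(z)` into
`E[f_z'(W̄) - W̄ f_z(W̄)]`. The Mills ratio bound `-w Φ(w) ≤ φ(w)` makes `w f_z(w)`, hence `f_z'`,
bounded, so `f_z` is the integral of `f_z'`. As `x̄ᵢ` and `W̄⁽ⁱ⁾` are independent, Fubini gives
`E[x̄ᵢ (f_z(W̄) - f_z(W̄⁽ⁱ⁾))] = ∫ E[f_z'(W̄⁽ⁱ⁾ + t)] K̄ᵢ(t) dt`, where `∫ K̄ᵢ = E[x̄ᵢ²]`. Summing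
over `i` leaves the deficits `1 - ∑ᵢ E[x̄ᵢ²]` and `-E[x̄ᵢ]`, which are the tail moments of the `ξᵢ`
because `∑ᵢ E[ξᵢ²] = 1` and `E[ξᵢ] = 0`.
-/

open Filter Set Topology
open scoped ENNReal Interval NNReal

section StandardNormal

local notation "φ" => gaussianPDFReal 0 1

lemma hasDerivAt_gaussianPDFReal (m : ℝ) (v : ℝ≥0) (x : ℝ) :
    HasDerivAt (gaussianPDFReal m v) (-((x - m) / v) * gaussianPDFReal m v x) x := by
  have hexponent : HasDerivAt (fun y : ℝ ↦ -(y - m) ^ 2 / (2 * v)) (-((x - m) / v)) x := by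
    convert! ((((hasDerivAt_id x).sub_const m).pow 2).neg.div_const (2 * (v : ℝ))) using 1
    simp only [id, Nat.cast_ofNat, Nat.add_one_sub_one, pow_one, mul_one]
    rw [← mul_neg, mul_div_mul_left _ _ two_ne_zero, neg_div]
  rw [gaussianPDFReal_def]
  convert! hexponent.exp.const_mul (√(2 * π * v))⁻¹ using 1
  ring

lemma continuous_gaussianPDFReal (m : ℝ) (v : ℝ≥0) : Continuous (gaussianPDFReal m v) :=
  continuous_iff_continuousAt.2 fun x ↦ (hasDerivAt_gaussianPDFReal m v x).continuousAt

lemma gaussianPDFReal_zero_one_apply (x : ℝ) : φ x = (√(2 * π))⁻¹ * exp (-x ^ 2 / 2) := by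
  simp [gaussianPDFReal_def]

lemma gaussianPDFReal_zero_one_pos (x : ℝ) : 0 < φ x :=
  gaussianPDFReal_pos 0 1 x one_ne_zero

lemma hasDerivAt_gaussianPDFReal_zero_one (x : ℝ) : HasDerivAt φ (-x * φ x) x := by
  simpa using hasDerivAt_gaussianPDFReal 0 1 x

lemma integrable_neg_mul_gaussianPDFReal_zero_one : Integrable fun x : ℝ ↦ -x * φ x := by
  refine ((integrable_mul_exp_neg_mul_sq one_half_pos).const_mul (-(√(2 * π))⁻¹)).congr
    (ae_of_all _ fun x ↦ ?_)
  simp only [gaussianPDFReal_zero_one_apply, show -(1 / 2 : ℝ) * x ^ 2 = -x ^ 2 / 2 by ring]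
  ring

lemma integral_Iic_neg_mul_gaussianPDFReal_zero_one (w : ℝ) : ∫ x in Iic w, -x * φ x = φ w := by
  have hint := integrable_neg_mul_gaussianPDFReal_zero_one.integrableOn (s := Iic w)
  have htendsto : Tendsto φ atBot (𝓝 0) :=
    tendsto_zero_of_hasDerivAt_of_integrableOn_Iic
      (fun x _ ↦ hasDerivAt_gaussianPDFReal_zero_one x) hint
      (integrable_gaussianPDFReal 0 1).integrableOn
  simpa using integral_Iic_of_hasDerivAt_of_tendsto'
    (fun x _ ↦ hasDerivAt_gaussianPDFReal_zero_one x) hint htendsto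

lemma Phi_eq_integral_gaussianPDFReal (w : ℝ) : Phi w = ∫ x in Iic w, φ x := by
  simp only [Phi, gaussianPDFReal_zero_one_apply, integral_const_mul]

lemma Phi_eq_cdf (w : ℝ) : Phi w = cdf (gaussianReal 0 1) w := by
  rw [Phi_eq_integral_gaussianPDFReal, cdf_eq_real, measureReal_def,
    gaussianReal_apply_eq_integral 0 one_ne_zero,
    ENNReal.toReal_ofReal (integral_nonneg (gaussianPDFReal_nonneg 0 1))]

lemma Phi_nonneg (w : ℝ) : 0 ≤ Phi w :=
  Phi_eq_cdf w ▸ cdf_nonneg _ w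

lemma Phi_le_one (w : ℝ) : Phi w ≤ 1 :=
  Phi_eq_cdf w ▸ cdf_le_one _ w

lemma monotone_Phi : Monotone Phi :=
  funext Phi_eq_cdf ▸ monotone_cdf (gaussianReal 0 1)

lemma Phi_neg (w : ℝ) : Phi (-w) = 1 - Phi w := by
  have := nullSingletonClass_gaussianReal (μ := 0) (one_ne_zero (α := ℝ≥0))
  have hsymm : (gaussianReal 0 1).map Neg.neg = gaussianReal 0 1 := by
    simpa using gaussianReal_map_neg (μ := 0) (v := 1)
  calc Phi (-w) = (gaussianReal 0 1).real (Iic (-w)) := by rw [Phi_eq_cdf, cdf_eq_real]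
    _ = (gaussianReal 0 1).real (Iic w)ᶜ := by
      rw [← hsymm, map_measureReal_apply measurable_neg measurableSet_Iic, hsymm, neg_preimage,
        neg_Iic, neg_neg, compl_Iic, measureReal_congr Ioi_ae_eq_Ici]
    _ = 1 - Phi w := by rw [probReal_compl_eq_one_sub measurableSet_Iic, Phi_eq_cdf, cdf_eq_real]

lemma hasDerivAt_Phi (w : ℝ) : HasDerivAt Phi (φ w) w := by
  have hint (a : ℝ) : IntegrableOn φ (Iic a) := (integrable_gaussianPDFReal 0 1).integrableOn
  have hPhi : Phi = fun y ↦ (∫ x in (0 : ℝ)..y, φ x) + Phi 0 := by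
    ext y
    rw [Phi_eq_integral_gaussianPDFReal, Phi_eq_integral_gaussianPDFReal,
      ← intervalIntegral.integral_Iic_sub_Iic (hint 0) (hint y), sub_add_cancel]
  rw [hPhi]
  exact ((continuous_gaussianPDFReal 0 1).integral_hasStrictDerivAt 0 w).hasDerivAt.add_const _

lemma continuous_Phi : Continuous Phi :=
  continuous_iff_continuousAt.2 fun w ↦ (hasDerivAt_Phi w).continuousAt

-- On `x ≤ w` one has `-w ≤ -x`, and `-x φ(x)` is the derivative of `φ`.
lemma neg_mul_Phi_le_gaussianPDFReal (w : ℝ) : -w * Phi w ≤ φ w := by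
  rw [Phi_eq_integral_gaussianPDFReal, ← integral_const_mul,
    ← integral_Iic_neg_mul_gaussianPDFReal_zero_one w]
  refine setIntegral_mono_on ((integrable_gaussianPDFReal 0 1).integrableOn.const_mul _)
    integrable_neg_mul_gaussianPDFReal_zero_one.integrableOn measurableSet_Iic fun x hx ↦ ?_
  exact mul_le_mul_of_nonneg_right (neg_le_neg hx) (gaussianPDFReal_nonneg 0 1 x)

lemma mul_one_sub_Phi_le_gaussianPDFReal (w : ℝ) : w * (1 - Phi w) ≤ φ w := by
  simpa [Phi_neg, gaussianPDFReal_zero_one_apply] using neg_mul_Phi_le_gaussianPDFReal (-w)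

end StandardNormal

section LipschitzPrimitive

/-- `f` is a primitive of the bounded measurable function `f'`. Equivalently, `f` is Lipschitz and
`f'` is a version of its almost everywhere defined derivative; no pointwise differentiability is
required, since the Stein solution `fz z` has a kink at `z`. -/
structure IsLipschitzPrimitive (f f' : ℝ → ℝ) : Prop where
  measurable_deriv : Measurable f'
  exists_bound : ∃ C, ∀ x, |f' x| ≤ C
  integral_deriv : ∀ a b, ∫ t in a..b, f' t = f b - f a

variable {f f' : ℝ → ℝ}

lemma isLipschitzPrimitive_of_hasDerivAt_off_countable {s : Set ℝ} (hs : s.Countable)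
    (hf : Continuous f) (hf' : Measurable f') {C : ℝ} (hC : ∀ x, |f' x| ≤ C)
    (hderiv : ∀ x ∉ s, HasDerivAt f (f' x) x) : IsLipschitzPrimitive f f' where
  measurable_deriv := hf'
  exists_bound := ⟨C, hC⟩
  integral_deriv a b := by
    refine integral_eq_of_hasDerivAt_off_countable f f' hs hf.continuousOn
      (fun x hx ↦ hderiv x hx.2) ?_
    rw [intervalIntegrable_iff]
    exact IntegrableOn.of_bound measure_Ioc_lt_top hf'.aestronglyMeasurable C (ae_of_all _ hC)

namespace IsLipschitzPrimitive

variable {Ω : Type*} [MeasurableSpace Ω] {μ : Measure Ω} [IsFiniteMeasure μ] {Y : Ω → ℝ}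

lemma exists_lipschitzWith (hf : IsLipschitzPrimitive f f') : ∃ K, LipschitzWith K f := by
  obtain ⟨C, hC⟩ := hf.exists_bound
  refine ⟨C.toNNReal, LipschitzWith.of_dist_le' fun x y ↦ ?_⟩
  rw [dist_comm, Real.dist_eq, ← hf.integral_deriv x y, dist_comm, Real.dist_eq]
  exact intervalIntegral.norm_integral_le_of_norm_le_const (f := f') fun t _ ↦ hC t

lemma integrable_deriv_comp (hf : IsLipschitzPrimitive f f') (hY : AEMeasurable Y μ) :
    Integrable (fun ω ↦ f' (Y ω)) μ := by
  obtain ⟨C, hC⟩ := hf.exists_bound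
  exact .of_bound (hf.measurable_deriv.comp_aemeasurable hY).aestronglyMeasurable C
    (ae_of_all _ fun ω ↦ hC _)

lemma memLp_comp (hf : IsLipschitzPrimitive f f') {p : ℝ≥0∞} (hY : MemLp Y p μ) :
    MemLp (fun ω ↦ f (Y ω)) p μ := by
  obtain ⟨K, hK⟩ := hf.exists_lipschitzWith
  have hcentred : LipschitzWith K fun x ↦ f x - f 0 := fun x y ↦ by
    simpa only [edist_sub_right] using hK x y
  convert! (hcentred.comp_memLp (sub_self _) hY).add (memLp_const (f 0)) using 2
  simp

end IsLipschitzPrimitive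

end LipschitzPrimitive

section SteinSolution

local notation "φ" => gaussianPDFReal 0 1

lemma fz_eq_div_gaussianPDFReal (z w : ℝ) :
    fz z w = Phi (min w z) * (1 - Phi (max w z)) / φ w := by
  have hinv : √(2 * π) * exp (w ^ 2 / 2) = (φ w)⁻¹ := by
    rw [gaussianPDFReal_zero_one_apply, mul_inv, inv_inv, ← exp_neg, neg_div, neg_neg]
  rw [fz, hinv]
  split_ifs with hwz
  · rw [min_eq_left hwz, max_eq_right hwz]
    ring
  · rw [min_eq_right (not_le.1 hwz).le, max_eq_left (not_le.1 hwz).le]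
    ring

lemma fz_nonneg (z w : ℝ) : 0 ≤ fz z w := by
  rw [fz_eq_div_gaussianPDFReal]
  exact div_nonneg (mul_nonneg (Phi_nonneg _) (sub_nonneg.2 (Phi_le_one _)))
    (gaussianPDFReal_nonneg 0 1 w)

lemma fz_le_Phi_div_gaussianPDFReal (z w : ℝ) : fz z w ≤ Phi w / φ w := by
  rw [fz_eq_div_gaussianPDFReal]
  refine div_le_div_of_nonneg_right ?_ (gaussianPDFReal_nonneg 0 1 w)
  calc Phi (min w z) * (1 - Phi (max w z)) ≤ Phi (min w z) :=
        mul_le_of_le_one_right (Phi_nonneg _) (sub_le_self 1 (Phi_nonneg _))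
    _ ≤ Phi w := monotone_Phi (min_le_left w z)

lemma fz_le_one_sub_Phi_div_gaussianPDFReal (z w : ℝ) : fz z w ≤ (1 - Phi w) / φ w := by
  rw [fz_eq_div_gaussianPDFReal]
  refine div_le_div_of_nonneg_right ?_ (gaussianPDFReal_nonneg 0 1 w)
  calc Phi (min w z) * (1 - Phi (max w z)) ≤ 1 - Phi (max w z) :=
        mul_le_of_le_one_left (sub_nonneg.2 (Phi_le_one _)) (Phi_le_one _)
    _ ≤ 1 - Phi w := sub_le_sub_left (monotone_Phi (le_max_left w z)) 1

lemma abs_mul_fz_le_one (z w : ℝ) : |w * fz z w| ≤ 1 := by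
  have hφ := gaussianPDFReal_zero_one_pos w
  rw [abs_mul, abs_of_nonneg (fz_nonneg z w)]
  rcases le_total 0 w with hw | hw
  · calc |w| * fz z w ≤ w * ((1 - Phi w) / φ w) := by
          rw [abs_of_nonneg hw]
          exact mul_le_mul_of_nonneg_left (fz_le_one_sub_Phi_div_gaussianPDFReal z w) hw
      _ ≤ 1 := by
          rw [← mul_div_assoc, div_le_one hφ]
          exact mul_one_sub_Phi_le_gaussianPDFReal w
  · calc |w| * fz z w ≤ -w * (Phi w / φ w) := by
          rw [abs_of_nonpos hw]
          exact mul_le_mul_of_nonneg_left (fz_le_Phi_div_gaussianPDFReal z w) (neg_nonneg.2 hw)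
      _ ≤ 1 := by
          rw [← mul_div_assoc, div_le_one hφ]
          exact neg_mul_Phi_le_gaussianPDFReal w

lemma continuous_fz (z : ℝ) : Continuous (fz z) := by
  have hPhi := continuous_Phi
  simp_rw [funext (fz_eq_div_gaussianPDFReal z)]
  exact Continuous.div (by fun_prop) (continuous_gaussianPDFReal 0 1)
    fun w ↦ (gaussianPDFReal_zero_one_pos w).ne'

lemma hasDerivAt_fz {z w : ℝ} (hwz : w ≠ z) : HasDerivAt (fz z) (fz' z w) w := by
  have hφ := (gaussianPDFReal_zero_one_pos w).ne'
  have hdφ := hasDerivAt_gaussianPDFReal_zero_one w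
  have hdPhi := hasDerivAt_Phi w
  rw [fz', fz_eq_div_gaussianPDFReal]
  rcases hwz.lt_or_gt with hlt | hgt
  · have hfz : fz z =ᶠ[𝓝 w] fun y ↦ Phi y * (1 - Phi z) / φ y := by
      filter_upwards [Iio_mem_nhds hlt] with y hy
      rw [fz_eq_div_gaussianPDFReal, min_eq_left hy.le, max_eq_right hy.le]
    rw [min_eq_left hlt.le, max_eq_right hlt.le, if_pos hlt.le]
    convert! ((hdPhi.mul_const (1 - Phi z)).div hdφ hφ).congr_of_eventuallyEq hfz using 1
    field_simp
    ring
  · have hfz : fz z =ᶠ[𝓝 w] fun y ↦ Phi z * (1 - Phi y) / φ y := by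
      filter_upwards [Ioi_mem_nhds hgt] with y hy
      rw [fz_eq_div_gaussianPDFReal, min_eq_right hy.le, max_eq_left hy.le]
    rw [min_eq_right hgt.le, max_eq_left hgt.le, if_neg hgt.not_ge]
    convert! (((hdPhi.const_sub 1).const_mul (Phi z)).div hdφ hφ).congr_of_eventuallyEq hfz
      using 1
    field_simp
    ring

lemma measurable_fz' (z : ℝ) : Measurable (fz' z) :=
  ((measurable_id.mul (continuous_fz z).measurable).add
    (measurable_const.ite measurableSet_Iic measurable_const)).sub_const _

lemma abs_fz'_le_two (z w : ℝ) : |fz' z w| ≤ 2 := by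
  have hindicator : |(if w ≤ z then 1 else 0) - Phi z| ≤ 1 := by
    rw [abs_le]
    split_ifs <;> constructor <;> linarith [Phi_nonneg z, Phi_le_one z]
  calc |fz' z w| = |w * fz z w + ((if w ≤ z then 1 else 0) - Phi z)| := by
        rw [fz', add_sub_assoc]
    _ ≤ |w * fz z w| + |(if w ≤ z then 1 else 0) - Phi z| := abs_add_le _ _
    _ ≤ 2 := by linarith [abs_mul_fz_le_one z w]

lemma isLipschitzPrimitive_fz (z : ℝ) : IsLipschitzPrimitive (fz z) (fz' z) :=
  isLipschitzPrimitive_of_hasDerivAt_off_countable (countable_singleton z) (continuous_fz z)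
    (measurable_fz' z) (abs_fz'_le_two z) fun _ ↦ hasDerivAt_fz

lemma integral_fz'_sub_mul_fz {Ω : Type*} [MeasurableSpace Ω] {μ : Measure Ω}
    [IsProbabilityMeasure μ] {Y : Ω → ℝ} (hY : AEMeasurable Y μ) (z : ℝ) :
    ∫ ω, (fz' z (Y ω) - Y ω * fz z (Y ω)) ∂μ = μ.real {ω | Y ω ≤ z} - Phi z := by
  have hset : NullMeasurableSet {ω | Y ω ≤ z} μ := nullMeasurableSet_le hY aemeasurable_const
  have hstein (ω : Ω) : fz' z (Y ω) - Y ω * fz z (Y ω)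
      = {ω | Y ω ≤ z}.indicator (fun _ ↦ 1) ω - Phi z := by
    simp only [fz', indicator_apply, mem_ofPred_eq]
    ring
  simp_rw [hstein]
  rw [integral_sub ((integrable_const _).indicator₀ hset) (integrable_const _),
    integral_indicator₀ hset, setIntegral_const, integral_const, probReal_univ, one_smul,
    smul_eq_mul, mul_one]

end SteinSolution

section KFunction

/-- The integrand `x (1{0 ≤ t ≤ x} - 1{x ≤ t < 0})` of the K-function, at the value `x` of the
random variable. -/
noncomputable def kIntegrand (x t : ℝ) : ℝ :=
  x * ((if 0 ≤ t ∧ t ≤ x then (1 : ℝ) else 0) - (if x ≤ t ∧ t < 0 then (1 : ℝ) else 0))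

lemma kIntegrand_nonneg (x t : ℝ) : 0 ≤ kIntegrand x t := by
  unfold kIntegrand
  split_ifs <;> grind

lemma kIntegrand_eq_zero {b x t : ℝ} (hb : 0 ≤ b) (hx : x ≤ b) (ht : b < t) :
    kIntegrand x t = 0 := by
  grind [kIntegrand]

lemma measurable_kIntegrand : Measurable fun p : ℝ × ℝ ↦ kIntegrand p.1 p.2 := by
  unfold kIntegrand
  refine measurable_fst.mul (.sub (.ite ?_ measurable_const measurable_const)
    (.ite ?_ measurable_const measurable_const))
  · exact (measurableSet_le measurable_const measurable_snd).inter
      (measurableSet_le measurable_snd measurable_fst)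
  · exact (measurableSet_le measurable_fst measurable_snd).inter
      (measurableSet_lt measurable_snd measurable_const)

lemma kIntegrand_ae_eq_indicator (x : ℝ) :
    kIntegrand x =ᵐ[volume] (Ι 0 x).indicator fun _ ↦ |x| := by
  filter_upwards [Measure.ae_ne volume 0, Measure.ae_ne volume x] with t ht0 htx
  rcases le_total 0 x with hx | hx
  · rw [uIoc_of_le hx, abs_of_nonneg hx]
    simp only [kIntegrand, indicator_apply, mem_Ioc]
    grind
  · rw [uIoc_of_ge hx, abs_of_nonpos hx]
    simp only [kIntegrand, indicator_apply, mem_Ioc]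
    grind

lemma integrable_kIntegrand (x : ℝ) : Integrable (kIntegrand x) := by
  rw [integrable_congr (kIntegrand_ae_eq_indicator x), integrable_indicator_iff measurableSet_uIoc]
  exact integrableOn_const measure_Ioc_lt_top.ne

lemma integral_mul_kIntegrand (h : ℝ → ℝ) (x : ℝ) :
    ∫ t, h t * kIntegrand x t = x * ∫ t in (0 : ℝ)..x, h t := by
  have hindicator : (fun t ↦ h t * kIntegrand x t) =ᵐ[volume]
      (Ι 0 x).indicator fun t ↦ |x| * h t := by
    filter_upwards [kIntegrand_ae_eq_indicator x] with t ht
    by_cases htx : t ∈ Ι 0 x <;> simp [ht, htx, mul_comm]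
  rw [integral_congr_ae hindicator, integral_indicator measurableSet_uIoc, integral_const_mul]
  rcases le_total 0 x with hx | hx
  · rw [abs_of_nonneg hx, uIoc_of_le hx, intervalIntegral.integral_of_le hx]
  · rw [abs_of_nonpos hx, uIoc_of_ge hx, intervalIntegral.integral_of_ge hx, neg_mul, mul_neg]

lemma integral_kIntegrand (x : ℝ) : ∫ t, kIntegrand x t = x ^ 2 := by
  simpa [sq] using integral_mul_kIntegrand (fun _ ↦ 1) x

variable {Ω : Type*} [MeasurableSpace Ω] {μ : Measure Ω} {X V : Ω → ℝ} {b : ℝ}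

/-- The K-function `K(t) = E[X (1{0 ≤ t ≤ X} - 1{X ≤ t < 0})]` of a random variable `X`, the
density that represents `E[X (f (V + X) - f V)]` as an average of `E[f' (V + t)]`. -/
noncomputable def kFunction (X : Ω → ℝ) (μ : Measure Ω) (t : ℝ) : ℝ :=
  ∫ ω, kIntegrand (X ω) t ∂μ

lemma kFunction_eq_zero {t : ℝ} (hb : 0 ≤ b) (hX : ∀ᵐ ω ∂μ, X ω ≤ b) (ht : b < t) :
    kFunction X μ t = 0 :=
  integral_eq_zero_of_ae <| hX.mono fun _ hω ↦ kIntegrand_eq_zero hb hω ht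

lemma integrable_kIntegrand_prod [SFinite μ] (hX : MemLp X 2 μ) :
    Integrable (fun p : Ω × ℝ ↦ kIntegrand (X p.1) p.2) (μ.prod volume) := by
  have hmeas : AEMeasurable (fun p : Ω × ℝ ↦ kIntegrand (X p.1) p.2) (μ.prod volume) :=
    measurable_kIntegrand.comp_aemeasurable
      (hX.aestronglyMeasurable.aemeasurable.comp_fst.prodMk measurable_snd.aemeasurable)
  rw [integrable_prod_iff hmeas.aestronglyMeasurable]
  refine ⟨ae_of_all _ fun ω ↦ integrable_kIntegrand (X ω), ?_⟩
  simpa only [norm_of_nonneg (kIntegrand_nonneg _ _), integral_kIntegrand] using hX.integrable_sq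

lemma integrable_kFunction [SFinite μ] (hX : MemLp X 2 μ) : Integrable (kFunction X μ) :=
  (integrable_kIntegrand_prod hX).integral_prod_right

lemma integral_kFunction [SFinite μ] (hX : MemLp X 2 μ) :
    ∫ t, kFunction X μ t = ∫ ω, X ω ^ 2 ∂μ := by
  simp only [kFunction, ← integral_kIntegrand]
  exact (integral_integral_swap (integrable_kIntegrand_prod hX)).symm

namespace IsLipschitzPrimitive

variable {f f' : ℝ → ℝ}

lemma integrable_deriv_mul_kIntegrand_prod [SFinite μ] (hf : IsLipschitzPrimitive f f')
    (hX : MemLp X 2 μ) (hV : AEMeasurable V μ) :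
    Integrable (fun p : Ω × ℝ ↦ f' (V p.1 + p.2) * kIntegrand (X p.1) p.2) (μ.prod volume) := by
  obtain ⟨C, hC⟩ := hf.exists_bound
  have hmeas : AEMeasurable (fun p : Ω × ℝ ↦ f' (V p.1 + p.2)) (μ.prod volume) :=
    hf.measurable_deriv.comp_aemeasurable (hV.comp_fst.add measurable_snd.aemeasurable)
  exact (integrable_kIntegrand_prod hX).bdd_mul hmeas.aestronglyMeasurable
    (ae_of_all _ fun _ ↦ hC _)

lemma integral_deriv_mul_kIntegrand (hf : IsLipschitzPrimitive f f') (v x : ℝ) :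
    ∫ t, f' (v + t) * kIntegrand x t = x * (f (v + x) - f v) := by
  rw [integral_mul_kIntegrand (fun t ↦ f' (v + t)), intervalIntegral.integral_comp_add_left f',
    hf.integral_deriv, add_zero]

lemma integral_deriv_mul_kIntegrand_of_indepFun (hf : IsLipschitzPrimitive f f')
    (hX : AEMeasurable X μ) (hV : AEMeasurable V μ) (hXV : IndepFun X V μ) (t : ℝ) :
    ∫ ω, f' (V ω + t) * kIntegrand (X ω) t ∂μ = (∫ ω, f' (V ω + t) ∂μ) * kFunction X μ t :=
  hXV.symm.integral_fun_comp_mul_comp hV hX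
    (hf.measurable_deriv.comp (measurable_add_const t)).aestronglyMeasurable
    (measurable_kIntegrand.comp measurable_prodMk_right).aestronglyMeasurable

lemma integrable_integral_deriv_mul_kFunction [SFinite μ] (hf : IsLipschitzPrimitive f f')
    (hX : MemLp X 2 μ) (hV : AEMeasurable V μ) (hXV : IndepFun X V μ) :
    Integrable fun t ↦ (∫ ω, f' (V ω + t) ∂μ) * kFunction X μ t := by
  simp only [← hf.integral_deriv_mul_kIntegrand_of_indepFun hX.aemeasurable hV hXV]
  exact (hf.integrable_deriv_mul_kIntegrand_prod hX hV).integral_prod_right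

lemma integral_integral_deriv_mul_kFunction [SFinite μ] (hf : IsLipschitzPrimitive f f')
    (hX : MemLp X 2 μ) (hV : AEMeasurable V μ) (hXV : IndepFun X V μ) :
    ∫ t, (∫ ω, f' (V ω + t) ∂μ) * kFunction X μ t = ∫ ω, X ω * (f (V ω + X ω) - f (V ω)) ∂μ := by
  simp only [← hf.integral_deriv_mul_kIntegrand_of_indepFun hX.aemeasurable hV hXV,
    ← hf.integral_deriv_mul_kIntegrand]
  exact (integral_integral_swap (hf.integrable_deriv_mul_kIntegrand_prod hX hV)).symm

lemma integral_mul_sub_of_indepFun [IsFiniteMeasure μ] (hf : IsLipschitzPrimitive f f')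
    (hX : MemLp X 2 μ) (hV : MemLp V 2 μ) (hXV : IndepFun X V μ) :
    ∫ ω, X ω * (f (V ω + X ω) - f (V ω)) ∂μ
      = ∫ ω, X ω * f (V ω + X ω) ∂μ - (∫ ω, X ω ∂μ) * ∫ ω, f (V ω) ∂μ := by
  obtain ⟨K, hK⟩ := hf.exists_lipschitzWith
  have hfactor : ∫ ω, X ω * f (V ω) ∂μ = (∫ ω, X ω ∂μ) * ∫ ω, f (V ω) ∂μ :=
    hXV.integral_fun_comp_mul_comp hX.aemeasurable hV.aemeasurable
      aestronglyMeasurable_id hK.continuous.aestronglyMeasurable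
  have hint : Integrable (fun ω ↦ X ω * f (V ω + X ω)) μ :=
    hX.integrable_mul (hf.memLp_comp (hV.add hX))
  have hint' : Integrable (fun ω ↦ X ω * f (V ω)) μ := hX.integrable_mul (hf.memLp_comp hV)
  simp_rw [mul_sub]
  rw [integral_sub hint hint', hfactor]

lemma setIntegral_Iic_integral_deriv_sub_mul_kFunction [IsFiniteMeasure μ]
    (hf : IsLipschitzPrimitive f f') (hX : MemLp X 2 μ) (hV : MemLp V 2 μ)
    (hXV : IndepFun X V μ) (hb : 0 ≤ b) (hXb : ∀ᵐ ω ∂μ, X ω ≤ b) :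
    ∫ t in Iic b, (∫ ω, (f' (V ω + X ω) - f' (V ω + t)) ∂μ) * kFunction X μ t
      = (∫ ω, f' (V ω + X ω) ∂μ) * (∫ ω, X ω ^ 2 ∂μ)
        - (∫ ω, X ω * f (V ω + X ω) ∂μ - (∫ ω, X ω ∂μ) * ∫ ω, f (V ω) ∂μ) := by
  have hsplit (t : ℝ) : (∫ ω, (f' (V ω + X ω) - f' (V ω + t)) ∂μ) * kFunction X μ t
      = (∫ ω, f' (V ω + X ω) ∂μ) * kFunction X μ t
        - (∫ ω, f' (V ω + t) ∂μ) * kFunction X μ t := by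
    rw [integral_sub (hf.integrable_deriv_comp (hV.aemeasurable.fun_add hX.aemeasurable))
      (hf.integrable_deriv_comp (hV.aemeasurable.add_const t)), sub_mul]
  have hvanish (t : ℝ) (ht : t ∉ Iic b) :
      (∫ ω, (f' (V ω + X ω) - f' (V ω + t)) ∂μ) * kFunction X μ t = 0 := by
    rw [kFunction_eq_zero hb hXb (not_le.1 ht), mul_zero]
  rw [setIntegral_eq_integral_of_forall_compl_eq_zero hvanish]
  simp_rw [hsplit]
  rw [integral_sub ((integrable_kFunction hX).const_mul _)
      (hf.integrable_integral_deriv_mul_kFunction hX hV.aemeasurable hXV),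
    integral_const_mul, integral_kFunction hX,
    hf.integral_integral_deriv_mul_kFunction hX hV.aemeasurable hXV,
    hf.integral_mul_sub_of_indepFun hX hV hXV]

end IsLipschitzPrimitive

end KFunction

section IndependentSum

variable {Ω ι : Type*} [MeasurableSpace Ω] {μ : Measure Ω} [Fintype ι] {X : ι → Ω → ℝ}

lemma indepFun_sum_sub_self (hX : ∀ i, AEMeasurable (X i) μ) (hindep : iIndepFun X μ) (i : ι) :
    IndepFun (X i) (fun ω ↦ ∑ j, X j ω - X i ω) μ := by
  classical
  convert! (hindep.indepFun_finsetSum_of_notMem₀ hX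
    (Finset.notMem_erase i Finset.univ)).symm using 1
  ext ω
  rw [Finset.sum_apply, ← Finset.sum_erase_add _ _ (Finset.mem_univ i), add_sub_cancel_right]

theorem IsLipschitzPrimitive.integral_deriv_sub_sum_mul [IsFiniteMeasure μ] {f f' : ℝ → ℝ}
    (hf : IsLipschitzPrimitive f f') (hX : ∀ i, MemLp (X i) 2 μ) (hindep : iIndepFun X μ) {b : ℝ}
    (hb : 0 ≤ b) (hXb : ∀ i, ∀ᵐ ω ∂μ, X i ω ≤ b) :
    ∫ ω, (f' (∑ j, X j ω) - (∑ j, X j ω) * f (∑ j, X j ω)) ∂μ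
      = (1 - ∑ i, ∫ ω, X i ω ^ 2 ∂μ) * (∫ ω, f' (∑ j, X j ω) ∂μ)
        + (∑ i, ∫ t in Iic b, (∫ ω, (f' (∑ j, X j ω - X i ω + X i ω)
            - f' (∑ j, X j ω - X i ω + t)) ∂μ) * kFunction (X i) μ t)
        - ∑ i, (∫ ω, X i ω ∂μ) * ∫ ω, f (∑ j, X j ω - X i ω) ∂μ := by
  have hW : MemLp (fun ω ↦ ∑ j, X j ω) 2 μ := memLp_finsetSum _ fun i _ ↦ hX i
  have hXfW (i : ι) : Integrable (fun ω ↦ X i ω * f (∑ j, X j ω)) μ :=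
    (hX i).integrable_mul (hf.memLp_comp hW)
  have hremainder (i : ι) := hf.setIntegral_Iic_integral_deriv_sub_mul_kFunction (hX i)
    (hW.sub (hX i)) (indepFun_sum_sub_self (fun i ↦ (hX i).aemeasurable) hindep i) hb (hXb i)
  simp only [Pi.sub_apply] at hremainder
  simp only [hremainder]
  simp only [sub_add_cancel, Finset.sum_sub_distrib, ← Finset.mul_sum, Finset.sum_mul]
  rw [integral_sub (hf.integrable_deriv_comp hW.aemeasurable)
    (integrable_finsetSum _ fun i _ ↦ hXfW i), integral_finsetSum _ fun i _ ↦ hXfW i]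
  ring

end IndependentSum

section Truncation

lemma integrable_pow_of_memLp {Ω : Type*} [MeasurableSpace Ω] {μ : Measure Ω} {X : Ω → ℝ} {k : ℕ}
    (hk : k ≠ 0) (hX : MemLp X k μ) : Integrable (fun ω ↦ X ω ^ k) μ :=
  (hX.integrable_norm_pow hk).mono (hX.aestronglyMeasurable.pow k) (by simp)

variable {Ω : Type*} {n : ℕ} {ξ : Fin n → Ω → ℝ} {i : Fin n}

lemma xbar_le_one (ω : Ω) : xbar ξ i ω ≤ 1 := by
  grind [xbar]

lemma abs_xbar_le_abs (ω : Ω) : |xbar ξ i ω| ≤ |ξ i ω| := by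
  unfold xbar
  split_ifs <;> simp

lemma xbar_pow_add_ite {k : ℕ} (hk : k ≠ 0) (ω : Ω) :
    xbar ξ i ω ^ k + (if 1 < ξ i ω then ξ i ω ^ k else 0) = ξ i ω ^ k := by
  rcases le_or_gt (ξ i ω) 1 with h | h
  · simp [xbar, h, h.not_gt]
  · simp [xbar, h, h.not_ge, hk]

lemma measurable_ite_le_one : Measurable fun x : ℝ ↦ if x ≤ 1 then x else 0 :=
  measurable_id.ite measurableSet_Iic measurable_const

lemma iIndepFun_xbar [MeasurableSpace Ω] {μ : Measure Ω} (hindep : iIndepFun ξ μ) :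
    iIndepFun (xbar ξ) μ :=
  hindep.comp _ fun _ ↦ measurable_ite_le_one

lemma memLp_xbar [MeasurableSpace Ω] {μ : Measure Ω} {p : ℝ≥0∞} (hξ : MemLp (ξ i) p μ) :
    MemLp (xbar ξ i) p μ :=
  hξ.mono (measurable_ite_le_one.comp_aemeasurable hξ.aemeasurable).aestronglyMeasurable
    (ae_of_all _ abs_xbar_le_abs)

lemma integral_ite_one_lt_pow [MeasurableSpace Ω] {μ : Measure Ω} {k : ℕ} (hk : k ≠ 0)
    (hξ : MemLp (ξ i) k μ) :
    ∫ ω, (if 1 < ξ i ω then ξ i ω ^ k else 0) ∂μ = ∫ ω, ξ i ω ^ k ∂μ - ∫ ω, xbar ξ i ω ^ k ∂μ := by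
  rw [← integral_sub (integrable_pow_of_memLp hk hξ) (integrable_pow_of_memLp hk (memLp_xbar hξ))]
  refine integral_congr_ae (ae_of_all _ fun ω ↦ ?_)
  exact eq_sub_of_add_eq' (xbar_pow_add_ite hk ω)

end Truncation

/-- Decomposition of P(Wbar <= z) - Phi(z) into R1 + R2 + R3. -/
theorem stein_decomposition
    {Ω : Type*} [MeasureSpace Ω] [IsProbabilityMeasure (ℙ : Measure Ω)]
    {n : ℕ} (ξ : Fin n → Ω → ℝ)
    (hmeas : ∀ i, Measurable (ξ i))
    (hindep : iIndepFun ξ ℙ)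
    (hL2 : ∀ i, MemLp (ξ i) 2 ℙ)
    (hmean : ∀ i, ∫ ω, ξ i ω = 0)
    (hvar : ∑ i, ∫ ω, (ξ i ω) ^ 2 = 1)
    (z : ℝ) :
    (ℙ {ω | Wbar ξ ω ≤ z}).toReal - Phi z
      = (∑ i, ∫ ω, (if 1 < ξ i ω then (ξ i ω) ^ 2 else 0)) * (∫ ω, fz' z (Wbar ξ ω))
        + (∑ i, ∫ t in Set.Iic (1 : ℝ),
            (∫ ω, (fz' z (Wbari ξ i ω + xbar ξ i ω) - fz' z (Wbari ξ i ω + t))) * Kbar ξ i t)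
        + ∑ i, (∫ ω, (if 1 < ξ i ω then ξ i ω else 0)) * (∫ ω, fz z (Wbari ξ i ω)) := by
  have hxbar (i : Fin n) : MemLp (xbar ξ i) 2 ℙ := memLp_xbar (hL2 i)
  have hWbar : AEMeasurable (Wbar ξ) ℙ :=
    Finset.aemeasurable_fun_sum _ fun i _ ↦ (hxbar i).aemeasurable
  have hvar_tail : ∑ i, ∫ ω, (if 1 < ξ i ω then ξ i ω ^ 2 else 0)
      = 1 - ∑ i, ∫ ω, xbar ξ i ω ^ 2 := by
    simp only [integral_ite_one_lt_pow two_ne_zero (hL2 _), Finset.sum_sub_distrib, hvar]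
  have hmean_tail (i : Fin n) : ∫ ω, (if 1 < ξ i ω then ξ i ω else 0) = -∫ ω, xbar ξ i ω := by
    have hL1 : MemLp (ξ i) (1 : ℕ) ℙ := (hL2 i).mono_exponent (by norm_num)
    simpa [hmean i] using integral_ite_one_lt_pow one_ne_zero hL1
  simp only [hvar_tail, hmean_tail, neg_mul, Finset.sum_neg_distrib, ← sub_eq_add_neg]
  rw [← measureReal_def, ← integral_fz'_sub_mul_fz hWbar z]
  exact (isLipschitzPrimitive_fz z).integral_deriv_sub_sum_mul hxbar (iIndepFun_xbar hindep)
    zero_le_one fun i ↦ ae_of_all _ xbar_le_one
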